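/- Let N ≥ 2 and 0 < s < t < 1. The generalized fractional isoperimetric problem admits a minimizer: there exists a measurable set E* ⊆ ℝ^N with 0 < |E*| < ∞ and P_t(E*) < ∞ such that W_{s,t}(E*) ≤ W_{s,t}(E) for every measurable set E ⊆ ℝ^N with 0 < |E| < ∞ and P_t(E) < ∞. -/

import Mathlib

open MeasureTheory ENNReal

/-- Interaction energy `∫_A ∫_B |x-y|^{-(N+α)} dy dx` in `[0,∞]`. -/
noncomputable def interEnergy (N : ℕ) (α : ℝ)
    (A B : Set (EuclideanSpace ℝ (Fin N))) : ℝ≥0∞ :=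
  ∫⁻ x in A, ∫⁻ y in B, ENNReal.ofReal (‖x - y‖ ^ (-((N : ℝ) + α))) ∂volume ∂volume

/-- The fractional `α`-perimeter `P_α(E) = ∫_E ∫_{Eᶜ} |x-y|^{-(N+α)} dy dx`. -/
noncomputable def fracPer (N : ℕ) (α : ℝ) (E : Set (EuclideanSpace ℝ (Fin N))) : ℝ≥0∞ :=
  interEnergy N α E Eᶜ

/-- The scale-invariant generalized isoperimetric functional
`W_{s,t}(E) = ((1-t) P_t(E))^{N-s} / (s P_s(E))^{N-t}`. -/
noncomputable def isoW (N : ℕ) (s t : ℝ) (E : Set (EuclideanSpace ℝ (Fin N))) : ℝ :=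
  ((1 - t) * (fracPer N t E).toReal) ^ ((N : ℝ) - s) /
    (s * (fracPer N s E).toReal) ^ ((N : ℝ) - t)

open Filter Topology

abbrev VV (N : ℕ) := EuclideanSpace ℝ (Fin N)

noncomputable def kk (N : ℕ) (α : ℝ) (z : VV N) : ℝ≥0∞ :=
  ENNReal.ofReal (‖z‖ ^ (-((N : ℝ) + α)))

theorem kk_meas (N : ℕ) (α : ℝ) : Measurable (kk N α) := by
  unfold kk; fun_prop

theorem kk_meas2 (N : ℕ) (α : ℝ) : Measurable (fun p : VV N × VV N => kk N α (p.1 - p.2)) :=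
  (kk_meas N α).comp (measurable_fst.sub measurable_snd)

theorem fracPer_eq (N : ℕ) (α : ℝ) (E : Set (VV N)) :
    fracPer N α E = ∫⁻ x in E, ∫⁻ y in Eᶜ, kk N α (x - y) := rfl

theorem kk_smul (N : ℕ) (α : ℝ) (c : ℝ) (hc : 0 < c) (z : VV N) :
    kk N α (c • z) = ENNReal.ofReal (c ^ (-((N : ℝ) + α))) * kk N α z := by
  unfold kk
  rw [norm_smul, Real.norm_of_nonneg hc.le, Real.mul_rpow hc.le (norm_nonneg _),
    ENNReal.ofReal_mul (by positivity)]

theorem kk_neg (N : ℕ) (α : ℝ) (z : VV N) : kk N α (-z) = kk N α z := by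
  unfold kk; rw [norm_neg]

theorem lint_pre_smul (N : ℕ) (c : ℝ) (hc : 0 < c) (E : Set (VV N)) (hE : MeasurableSet E)
    (f : VV N → ℝ≥0∞) (hf : Measurable f) :
    ∫⁻ x in (fun x => c • x) ⁻¹' E, f (c • x) =
      ENNReal.ofReal (c ^ (-(N : ℝ))) * ∫⁻ x in E, f x := by
  have h := setLIntegral_map (μ := (volume : Measure (VV N))) hE hf (measurable_const_smul c)
  rw [← h, Measure.map_addHaar_smul _ hc.ne']
  rw [Measure.restrict_smul, lintegral_smul_measure, smul_eq_mul, finrank_euclideanSpace_fin,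
    abs_of_pos (by positivity), Real.rpow_neg hc.le, Real.rpow_natCast]

theorem vol_pre_smul (N : ℕ) (c : ℝ) (hc : 0 < c) (E : Set (VV N)) :
    volume ((fun x => c • x) ⁻¹' E) = ENNReal.ofReal (c ^ (-(N : ℝ))) * volume E := by
  rw [Measure.addHaar_preimage_smul _ hc.ne', finrank_euclideanSpace_fin,
    abs_of_pos (by positivity), Real.rpow_neg hc.le, Real.rpow_natCast]

theorem fracPer_pre_smul (N : ℕ) (α : ℝ) (c : ℝ) (hc : 0 < c) (E : Set (VV N))
    (hE : MeasurableSet E) :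
    fracPer N α ((fun x => c • x) ⁻¹' E) =
      ENNReal.ofReal (c ^ (-((N : ℝ) - α))) * fracPer N α E := by
  rw [fracPer_eq, fracPer_eq]
  have h1 : ∀ x y : VV N, kk N α (x - y) =
      ENNReal.ofReal (c ^ ((N : ℝ) + α)) * kk N α (c • x - c • y) := by
    intro x y
    rw [← smul_sub, kk_smul _ _ _ hc, ← mul_assoc, ← ENNReal.ofReal_mul (by positivity),
      ← Real.rpow_add hc]
    simp
  have hm : ∀ x : VV N, Measurable (fun y => kk N α (x - y)) := fun x =>
    (kk_meas N α).comp (measurable_const.sub measurable_id)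
  have h2 : ∀ x : VV N, ∫⁻ y in ((fun x => c • x) ⁻¹' E)ᶜ, kk N α (x - y) =
      ENNReal.ofReal (c ^ α) * ∫⁻ y in Eᶜ, kk N α (c • x - y) := by
    intro x
    simp_rw [h1 x]
    have hmm : Measurable (fun y => kk N α (c • x - c • y)) :=
      (hm (c • x)).comp (measurable_const_smul c)
    rw [lintegral_const_mul _ hmm, ← Set.preimage_compl,
      lint_pre_smul N c hc _ hE.compl _ (hm (c • x)), ← mul_assoc,
      ← ENNReal.ofReal_mul (by positivity), ← Real.rpow_add hc]
    congr 3; ring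
  simp_rw [h2]
  have hm2 : Measurable (fun x => ∫⁻ y in Eᶜ, kk N α (x - y)) :=
    Measurable.lintegral_prod_right' (kk_meas2 N α)
  have hmm : Measurable (fun x => ∫⁻ y in Eᶜ, kk N α (c • x - y)) :=
      hm2.comp (measurable_const_smul c)
  rw [lintegral_const_mul _ hmm,
    lint_pre_smul N c hc _ hE _ hm2, ← mul_assoc,
      ← ENNReal.ofReal_mul (by positivity), ← Real.rpow_add hc]
  congr 3; ring

theorem fracPer_pre_add (N : ℕ) (α : ℝ) (v : VV N) (E : Set (VV N))
    (hE : MeasurableSet E) :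
    fracPer N α ((fun x => x + v) ⁻¹' E) = fracPer N α E := by
  rw [fracPer_eq, fracPer_eq]
  have hv := measurePreserving_add_right (volume : Measure (VV N)) v
  have hm : ∀ x : VV N, Measurable (fun y => kk N α (x - y)) := fun x =>
    (kk_meas N α).comp (measurable_const.sub measurable_id)
  have h2 : ∀ x : VV N, ∫⁻ y in ((fun x => x + v) ⁻¹' E)ᶜ, kk N α (x - y) =
      ∫⁻ y in Eᶜ, kk N α ((x + v) - y) := by
    intro x
    rw [← hv.setLIntegral_comp_preimage hE.compl (hm (x + v)), Set.preimage_compl]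
    simp
  simp_rw [h2]
  have hm2 : Measurable (fun x => ∫⁻ y in Eᶜ, kk N α (x - y)) :=
    Measurable.lintegral_prod_right' (kk_meas2 N α)
  exact hv.setLIntegral_comp_preimage hE hm2

theorem vol_pre_add (N : ℕ) (v : VV N) (E : Set (VV N)) :
    volume ((fun x => x + v) ⁻¹' E) = volume E := measure_preimage_add_right _ _ _

/-- tail constant -/
noncomputable def tc (N : ℕ) (α : ℝ) : ℝ≥0∞ := ∫⁻ z in {z : VV N | 1 ≤ ‖z‖}, kk N α z

theorem meas_far (N : ℕ) (r : ℝ) : MeasurableSet {z : VV N | r ≤ ‖z‖} :=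
  measurableSet_le measurable_const measurable_norm

theorem tc_lt (N : ℕ) (α : ℝ) (hα : 0 < α) : tc N α < ⊤ := by
  have hi : Integrable (fun x : VV N => (1 + ‖x‖) ^ (-((N : ℝ) + α))) := by
    apply integrable_one_add_norm
    rw [finrank_euclideanSpace_fin]; linarith
  have hf := (hi.const_mul (2 ^ ((N : ℝ) + α))).lintegral_lt_top
  refine lt_of_le_of_lt ?_ hf
  unfold tc
  refine (setLIntegral_mono' (meas_far N 1) ?_).trans (setLIntegral_le_lintegral _ _)
  intro z hz
  have hz : 1 ≤ ‖z‖ := hz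
  unfold kk
  apply ENNReal.ofReal_le_ofReal
  have : (2 : ℝ) ^ ((N : ℝ) + α) * (1 + ‖z‖) ^ (-((N : ℝ) + α)) =
      ((1 + ‖z‖) / 2) ^ (-((N : ℝ) + α)) := by
    rw [Real.div_rpow (by positivity) (by positivity), Real.rpow_neg zero_le_two]
    field_simp
  rw [this]
  apply Real.rpow_le_rpow_of_nonpos (by positivity) (by linarith)
  have : (0 : ℝ) ≤ N := Nat.cast_nonneg N
  linarith

theorem tail_eq (N : ℕ) (α r : ℝ) (hr : 0 < r) (x : VV N) :
    ∫⁻ y in {y : VV N | r ≤ ‖x - y‖}, kk N α (x - y) =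
      ENNReal.ofReal (r ^ (-α)) * tc N α := by
  have h1 : ∫⁻ y in {y : VV N | r ≤ ‖x - y‖}, kk N α (x - y) =
      ∫⁻ z in {z : VV N | r ≤ ‖z‖}, kk N α z :=
    (Measure.measurePreserving_sub_left (volume : Measure (VV N)) x).setLIntegral_comp_preimage
      (meas_far N r) (kk_meas N α)
  have h2 := lint_pre_smul N r hr _ (meas_far N r) _ (kk_meas N α)
  have h3 : (fun x : VV N => r • x) ⁻¹' {z : VV N | r ≤ ‖z‖} = {z : VV N | 1 ≤ ‖z‖} := by
    ext z
    simp [norm_smul, abs_of_pos hr, hr]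
  rw [h3] at h2
  simp_rw [kk_smul N α r hr] at h2
  rw [lintegral_const_mul _ (kk_meas N α)] at h2
  rw [h1]
  have h4 : ∫⁻ z in {z : VV N | r ≤ ‖z‖}, kk N α z = ENNReal.ofReal (r ^ (N : ℝ)) *
    (ENNReal.ofReal (r ^ (-(N : ℝ))) * ∫⁻ z in {z : VV N | r ≤ ‖z‖}, kk N α z) := by
    rw [← mul_assoc, ← ENNReal.ofReal_mul (by positivity), ← Real.rpow_add hr]
    simp
  rw [h4, ← h2, ← mul_assoc, ← ENNReal.ofReal_mul (by positivity), ← Real.rpow_add hr]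
  unfold tc
  congr 3; ring

theorem interp (N : ℕ) (s t r : ℝ) (hst : s < t) (hs : 0 < s) (hr : 0 < r) (E : Set (VV N))
    (hE : MeasurableSet E) :
    fracPer N s E ≤ ENNReal.ofReal (r ^ (t - s)) * fracPer N t E +
      ENNReal.ofReal (r ^ (-s)) * tc N s * volume E := by
  have hN0 : (0 : ℝ) ≤ N := Nat.cast_nonneg N
  have hm : ∀ α, ∀ x : VV N, Measurable (fun y => kk N α (x - y)) := fun α x =>
    (kk_meas N α).comp (measurable_const.sub measurable_id)
  have key : ∀ x : VV N, ∫⁻ y in Eᶜ, kk N s (x - y) ≤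
      ENNReal.ofReal (r ^ (t - s)) * (∫⁻ y in Eᶜ, kk N t (x - y)) +
        ENNReal.ofReal (r ^ (-s)) * tc N s := by
    intro x
    rw [← tail_eq N s r hr x, ← lintegral_const_mul _ (hm t x)]
    have hms : MeasurableSet {y : VV N | r ≤ ‖x - y‖} :=
      measurableSet_le measurable_const (measurable_norm.comp (measurable_const.sub measurable_id))
    rw [← lintegral_indicator hms]
    refine le_trans ?_ (add_le_add_right (setLIntegral_le_lintegral Eᶜ _) _)
    rw [← lintegral_add_left ((hm t x).const_mul _)]
    apply lintegral_mono
    intro y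
    simp only [Set.indicator]
    split_ifs with h
    · exact le_add_self
    · simp only [Set.mem_ofPred_eq, not_le] at h
      rw [add_zero]
      unfold kk
      rw [← ENNReal.ofReal_mul (by positivity)]
      apply ENNReal.ofReal_le_ofReal
      rcases (norm_nonneg (x - y)).eq_or_lt with h0 | h0
      · rw [← h0, Real.zero_rpow (by linarith), Real.zero_rpow (by linarith)]; simp
      · have : ‖x - y‖ ^ (-((N : ℝ) + s)) = ‖x - y‖ ^ (t - s) * ‖x - y‖ ^ (-((N : ℝ) + t)) := by
          rw [← Real.rpow_add h0]; congr 1; ring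
        rw [this]
        gcongr
  rw [fracPer_eq, fracPer_eq]
  have hm2 : Measurable (fun x => ∫⁻ y in Eᶜ, kk N t (x - y)) :=
    Measurable.lintegral_prod_right' (kk_meas2 N t)
  calc _ ≤ ∫⁻ x in E, (ENNReal.ofReal (r ^ (t - s)) * (∫⁻ y in Eᶜ, kk N t (x - y)) +
        ENNReal.ofReal (r ^ (-s)) * tc N s) := lintegral_mono key
    _ = _ := by
      rw [lintegral_add_right _ measurable_const, lintegral_const_mul _ hm2, setLIntegral_const]

theorem fracPer_s_lt (N : ℕ) (s t : ℝ) (hst : s < t) (hs : 0 < s) (E : Set (VV N))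
    (hE : MeasurableSet E) (hv : volume E < ⊤) (ht : fracPer N t E < ⊤) : fracPer N s E < ⊤ := by
  refine (interp N s t 1 hst hs one_pos E hE).trans_lt ?_
  exact ENNReal.add_lt_top.2 ⟨ENNReal.mul_lt_top ENNReal.ofReal_lt_top ht,
    ENNReal.mul_lt_top (ENNReal.mul_lt_top ENNReal.ofReal_lt_top (tc_lt N s hs)) hv⟩

/-- volume of unit ball -/
noncomputable def om (N : ℕ) : ℝ≥0∞ := volume (Metric.ball (0 : VV N) 1)

theorem om_pos (N : ℕ) : 0 < om N := Metric.measure_ball_pos _ _ one_pos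
theorem om_lt (N : ℕ) : om N < ⊤ := measure_ball_lt_top

theorem vol_ball (N : ℕ) (x : VV N) (r : ℝ) (hr : 0 < r) :
    volume (Metric.ball x r) = ENNReal.ofReal (r ^ (N : ℝ)) * om N := by
  rw [Measure.addHaar_ball_of_pos _ _ hr, finrank_euclideanSpace_fin, Real.rpow_natCast, om]

theorem lowerb (N : ℕ) (α r : ℝ) (hα : 0 < α) (hr : 0 < r) (E : Set (VV N))
    (hE : MeasurableSet E)
    (h : ∀ x, volume (E ∩ Metric.ball x r) ≤ volume (Metric.ball x r) / 2) :
    ENNReal.ofReal (r ^ (-α)) * (om N / 2) * volume E ≤ fracPer N α E := by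
  have hN0 : (0 : ℝ) ≤ N := Nat.cast_nonneg N
  rw [fracPer_eq, ← setLIntegral_const]
  refine setLIntegral_mono' hE ?_
  intro x hx
  have h1 : volume (Metric.ball x r) / 2 ≤ volume (Eᶜ ∩ Metric.ball x r) := by
    have h2 : volume (E ∩ Metric.ball x r) + volume (Eᶜ ∩ Metric.ball x r) =
      volume (Metric.ball x r) := by
      rw [Set.inter_comm, Set.inter_comm Eᶜ, ← Set.sdiff_eq]
      exact measure_inter_add_sdiff _ hE
    have hfin : volume (Metric.ball x r) / 2 ≠ ⊤ :=
      (ENNReal.div_lt_top measure_ball_lt_top.ne (by simp)).ne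
    have h3 : volume (Metric.ball x r) / 2 + volume (Metric.ball x r) / 2 ≤
        volume (Metric.ball x r) / 2 + volume (Eᶜ ∩ Metric.ball x r) := by
      rw [ENNReal.add_halves, ← h2]
      exact add_le_add_left (by rw [h2]; exact h x) _
    exact (ENNReal.add_le_add_iff_left hfin).1 h3
  have hmc : MeasurableSet (Eᶜ ∩ Metric.ball x r) := hE.compl.inter measurableSet_ball
  calc ENNReal.ofReal (r ^ (-α)) * (om N / 2)
      = ENNReal.ofReal (r ^ (-((N : ℝ) + α))) * (volume (Metric.ball x r) / 2) := by
        rw [vol_ball N x r hr, mul_div_assoc, ← mul_assoc,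
          ← ENNReal.ofReal_mul (by positivity), ← Real.rpow_add hr]
        congr 3; ring
    _ ≤ ENNReal.ofReal (r ^ (-((N : ℝ) + α))) * volume (Eᶜ ∩ Metric.ball x r) := by gcongr
    _ = ∫⁻ y in (Eᶜ ∩ Metric.ball x r), ENNReal.ofReal (r ^ (-((N : ℝ) + α))) := by
        rw [setLIntegral_const]
    _ ≤ ∫⁻ y in (Eᶜ ∩ Metric.ball x r), kk N α (x - y) := by
        refine setLIntegral_mono' hmc ?_
        rintro y ⟨hy1, hy2⟩
        have hne : x - y ≠ 0 := by
          intro h0; rw [sub_eq_zero] at h0; exact hy1 (h0 ▸ hx)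
        rw [Metric.mem_ball, dist_comm, dist_eq_norm] at hy2
        exact ENNReal.ofReal_le_ofReal
          (Real.rpow_le_rpow_of_nonpos (norm_pos_iff.2 hne) hy2.le (by linarith))
    _ ≤ _ := lintegral_mono_set Set.inter_subset_left

theorem exists_big (N : ℕ) (hN : 2 ≤ N) (V : ℝ≥0∞) (hV0 : 0 < V) (hV : V < ⊤) :
    ∃ r : ℝ, 0 < r ∧ ENNReal.ofReal (r ^ (N : ℝ)) * (om N / 2) = V := by
  have hN0 : (0 : ℝ) < N := by exact_mod_cast (by omega : 0 < N)
  have ho : om N / 2 ≠ ⊤ := (ENNReal.div_lt_top (om_lt N).ne (by simp)).ne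
  have ho0 : om N / 2 ≠ 0 := (ENNReal.div_pos (om_pos N).ne' (by simp)).ne'
  have hp : 0 < (V / (om N / 2)).toReal :=
    ENNReal.toReal_pos (ENNReal.div_pos hV0.ne' ho).ne' (ENNReal.div_lt_top hV.ne ho0).ne
  refine ⟨(V / (om N / 2)).toReal ^ ((N : ℝ)⁻¹), by positivity, ?_⟩
  rw [← Real.rpow_mul hp.le, inv_mul_cancel₀ hN0.ne', Real.rpow_one,
    ENNReal.ofReal_toReal (ENNReal.div_lt_top hV.ne ho0).ne, ENNReal.div_mul_cancel ho0 ho]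

theorem lowerb2 (N : ℕ) (α r : ℝ) (hα : 0 < α) (hr : 0 < r) (E : Set (VV N))
    (hE : MeasurableSet E) (h : ENNReal.ofReal (r ^ (N : ℝ)) * (om N / 2) = volume E) :
    ENNReal.ofReal (r ^ (-α)) * (om N / 2) * volume E ≤ fracPer N α E := by
  apply lowerb N α r hα hr E hE
  intro x
  rw [vol_ball N x r hr, mul_div_assoc, h]
  exact measure_mono Set.inter_subset_left

theorem fracPer_pos (N : ℕ) (hN : 2 ≤ N) (α : ℝ) (hα : 0 < α) (E : Set (VV N))
    (hE : MeasurableSet E) (hv0 : 0 < volume E) (hv : volume E < ⊤) : 0 < fracPer N α E := by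
  obtain ⟨r, hr, h⟩ := exists_big N hN _ hv0 hv
  refine lt_of_lt_of_le ?_ (lowerb2 N α r hα hr E hE h)
  have ho0 : 0 < om N / 2 := (ENNReal.div_pos (om_pos N).ne' (by simp))
  have : 0 < ENNReal.ofReal (r ^ (-α)) := ENNReal.ofReal_pos.2 (by positivity)
  exact ENNReal.mul_pos (ENNReal.mul_pos this.ne' ho0.ne').ne' hv0.ne'

theorem fracPer_zero (N : ℕ) (α : ℝ) (E : Set (VV N)) (hv0 : volume E = 0) :
    fracPer N α E = 0 := by
  rw [fracPer_eq]; exact setLIntegral_measure_zero _ _ hv0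

/-- volume bound -/
theorem vol_bound (N : ℕ) (hN : 2 ≤ N) (t : ℝ) (ht0 : 0 < t) (ht : t < 1) (C : ℝ≥0∞)
    (hC : C < ⊤) : ∃ M : ℝ≥0∞, M < ⊤ ∧ ∀ E : Set (VV N), MeasurableSet E → volume E < ⊤ →
      fracPer N t E ≤ C → volume E ≤ M := by
  have hN0 : (2 : ℝ) ≤ N := by exact_mod_cast hN
  have ho : om N / 2 ≠ ⊤ := (ENNReal.div_lt_top (om_lt N).ne (by simp)).ne
  have ho0 : om N / 2 ≠ 0 := (ENNReal.div_pos (om_pos N).ne' (by simp)).ne'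
  set o := om N / 2 with ho'
  set c : ℝ := (C / (o * o)).toReal with hc
  refine ⟨ENNReal.ofReal ((c ^ ((N : ℝ) - t)⁻¹) ^ (N : ℝ)) * o,
    ENNReal.mul_lt_top ENNReal.ofReal_lt_top ho.lt_top, ?_⟩
  intro E hE hv hP
  rcases eq_or_ne (volume E) 0 with h0 | h0
  · rw [h0]; exact zero_le
  obtain ⟨r, hr, h⟩ := exists_big N hN _ h0.bot_lt hv
  have h1 := (lowerb2 N t r ht0 hr E hE h).trans hP
  rw [← h, ← ho']
  rw [← h, ← ho'] at h1
  have h2 : ENNReal.ofReal (r ^ ((N : ℝ) - t)) * (o * o) ≤ C := by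
    refine le_trans (le_of_eq ?_) h1
    have : r ^ ((N : ℝ) - t) = r ^ (-t) * r ^ (N : ℝ) := by
      rw [← Real.rpow_add hr]; congr 1; ring
    rw [this, ENNReal.ofReal_mul (by positivity)]; ring
  have h3 : ENNReal.ofReal (r ^ ((N : ℝ) - t)) ≤ C / (o * o) :=
    (ENNReal.le_div_iff_mul_le (Or.inl (mul_ne_zero ho0 ho0)) (Or.inl (ENNReal.mul_ne_top ho ho))).2 h2
  have hfin : C / (o * o) ≠ ⊤ := (ENNReal.div_lt_top hC.ne (mul_ne_zero ho0 ho0)).ne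
  have h4 : r ^ ((N : ℝ) - t) ≤ c := by
    rw [hc]
    exact (ENNReal.ofReal_le_iff_le_toReal hfin).1 h3
  have h5 : r ≤ c ^ ((N : ℝ) - t)⁻¹ := by
    rw [Real.le_rpow_inv_iff_of_pos hr.le (by positivity) (by linarith)]
    exact h4
  gcongr

/-- non-vanishing -/
theorem nonvanish (N : ℕ) (s t : ℝ) (hs : 0 < s) (hst : s < t) (C : ℝ≥0∞)
    (hC : C < ⊤) : ∃ r : ℝ, 0 < r ∧ ∀ E : Set (VV N), MeasurableSet E →
      fracPer N t E ≤ C → fracPer N s E = 1 →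
      ∃ x, volume (Metric.ball x r) / 2 < volume (E ∩ Metric.ball x r) := by
  have ho : om N / 2 ≠ ⊤ := (ENNReal.div_lt_top (om_lt N).ne (by simp)).ne
  have ho0 : om N / 2 ≠ 0 := (ENNReal.div_pos (om_pos N).ne' (by simp)).ne'
  set o := om N / 2 with ho'
  set K : ℝ≥0∞ := C + tc N s * (C / o) with hK
  have hKf : K < ⊤ := ENNReal.add_lt_top.2 ⟨hC,
    ENNReal.mul_lt_top (tc_lt N s hs) (ENNReal.div_lt_top hC.ne ho0)⟩
  obtain ⟨r, hr, hr1⟩ : ∃ r : ℝ, 0 < r ∧ ENNReal.ofReal (r ^ (t - s)) * K < 1 := by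
    refine ⟨(1 / (K.toReal + 1)) ^ (t - s)⁻¹, by positivity, ?_⟩
    rw [← Real.rpow_mul (by positivity), inv_mul_cancel₀ (by linarith), Real.rpow_one]
    nth_rewrite 2 [← ENNReal.ofReal_toReal hKf.ne]
    rw [← ENNReal.ofReal_mul (by positivity), ENNReal.ofReal_lt_one, one_div, inv_mul_lt_iff₀ (by positivity)]
    linarith
  refine ⟨r, hr, fun E hE hP hs1 => ?_⟩
  by_contra! hcon
  have h1 := (lowerb N t r (hs.trans hst) hr E hE hcon).trans hP
  rw [← ho'] at h1
  have h2 : ENNReal.ofReal (r ^ (-t)) * volume E ≤ C / o := by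
    rw [ENNReal.le_div_iff_mul_le (Or.inl ho0) (Or.inl ho)]
    refine le_trans (le_of_eq ?_) h1; ring
  have h3 := interp N s t r hst hs hr E hE
  rw [hs1] at h3
  have h4 : ENNReal.ofReal (r ^ (t - s)) * fracPer N t E +
      ENNReal.ofReal (r ^ (-s)) * tc N s * volume E ≤ ENNReal.ofReal (r ^ (t - s)) * K := by
    have : r ^ (-s) = r ^ (t - s) * r ^ (-t) := by
      rw [← Real.rpow_add hr]; congr 1; ring
    rw [this, ENNReal.ofReal_mul (by positivity), hK]
    calc _ = ENNReal.ofReal (r ^ (t - s)) * (fracPer N t E + tc N s *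
            (ENNReal.ofReal (r ^ (-t)) * volume E)) := by ring
      _ ≤ _ := by gcongr
  exact absurd (h3.trans h4) (not_le.2 hr1)


noncomputable def kap (N : ℕ) (α : ℝ) : Measure (VV N × VV N) :=
  ((volume : Measure (VV N)).prod volume).withDensity (fun p => kk N α (p.1 - p.2))

def XX {N : ℕ} (E : Set (VV N)) : Set (VV N × VV N) := E ×ˢ Eᶜ ∪ Eᶜ ×ˢ E

theorem mem_XX {N : ℕ} (E : Set (VV N)) (p : VV N × VV N) :
    p ∈ XX E ↔ ((p.1 ∈ E ∧ p.2 ∉ E) ∨ (p.1 ∉ E ∧ p.2 ∈ E)) := by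
  simp [XX, Set.mem_prod]

theorem XX_meas {N : ℕ} {E : Set (VV N)} (hE : MeasurableSet E) : MeasurableSet (XX E) :=
  (hE.prod hE.compl).union (hE.compl.prod hE)

theorem kap_prod (N : ℕ) (α : ℝ) (A B : Set (VV N)) (hA : MeasurableSet A)
    (hB : MeasurableSet B) : kap N α (A ×ˢ B) = ∫⁻ x in A, ∫⁻ y in B, kk N α (x - y) := by
  rw [kap, withDensity_apply _ (hA.prod hB), setLIntegral_prod _ (kk_meas2 N α).aemeasurable]

theorem inter_symm (N : ℕ) (α : ℝ) (A B : Set (VV N)) :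
    ∫⁻ x in A, ∫⁻ y in B, kk N α (x - y) = ∫⁻ x in B, ∫⁻ y in A, kk N α (x - y) := by
  rw [lintegral_lintegral_swap (kk_meas2 N α).aemeasurable]
  congr 1; ext x; congr 1; ext y
  rw [← kk_neg, neg_sub]

theorem kap_XX (N : ℕ) (α : ℝ) (E : Set (VV N)) (hE : MeasurableSet E) :
    kap N α (XX E) = 2 * fracPer N α E := by
  have hd : Disjoint (E ×ˢ Eᶜ) (Eᶜ ×ˢ E) := by
    rw [Set.disjoint_left]
    rintro p ⟨h1, _⟩ ⟨h2, _⟩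
    exact h2 h1
  rw [XX, measure_union hd (hE.compl.prod hE), kap_prod _ _ _ _ hE hE.compl,
    kap_prod _ _ _ _ hE.compl hE, inter_symm N α Eᶜ E, fracPer_eq, two_mul]

theorem subadd (N : ℕ) (α : ℝ) (A E : Set (VV N)) (hA : MeasurableSet A)
    (hE : MeasurableSet E) :
    fracPer N α A ≤ fracPer N α E + fracPer N α (A \ E) + fracPer N α (E \ A) := by
  have h : XX A ⊆ (XX E ∪ XX (A \ E)) ∪ XX (E \ A) := by
    intro p
    simp only [mem_XX, Set.mem_union, Set.mem_sdiff]
    tauto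
  have h2 := (measure_mono (μ := kap N α) h).trans ((measure_union_le _ _).trans
    (add_le_add_left (measure_union_le _ _) _))
  rw [kap_XX _ _ _ hA, kap_XX _ _ _ hE, kap_XX _ _ _ (hA.diff hE), kap_XX _ _ _ (hE.diff hA),
    ← mul_add, ← mul_add] at h2
  exact (ENNReal.mul_le_mul_iff_right (by simp) (by simp)).1 h2

def BB {N : ℕ} (A E : Set (VV N)) : Set (VV N × VV N) :=
  {p | ¬((p.1 ∈ A ↔ p.1 ∈ E) ∧ (p.2 ∈ A ↔ p.2 ∈ E))}

theorem BB_meas {N : ℕ} {A E : Set (VV N)} (hA : MeasurableSet A)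
    (hE : MeasurableSet E) : MeasurableSet (BB A E) := by
  have h1 : MeasurableSet {x | x ∈ A ↔ x ∈ E} := by
    have : {x | x ∈ A ↔ x ∈ E} = (A ∩ E) ∪ (Aᶜ ∩ Eᶜ) := by
      ext x; simp only [Set.mem_ofPred_eq, Set.mem_union, Set.mem_inter_iff, Set.mem_compl_iff]; tauto
    rw [this]
    exact (hA.inter hE).union (hA.compl.inter hE.compl)
  exact ((measurable_fst h1).inter (measurable_snd h1)).compl

theorem bl_ineq (N : ℕ) (α : ℝ) (A E : Set (VV N)) (hA : MeasurableSet A)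
    (hE : MeasurableSet E) :
    2 * (fracPer N α E + fracPer N α (A \ E) + fracPer N α (E \ A)) ≤
      2 * fracPer N α A + 3 * kap N α (XX E ∩ BB A E) := by
  rw [mul_add, mul_add, ← kap_XX _ _ _ hA, ← kap_XX _ _ _ hE, ← kap_XX _ _ _ (hA.diff hE),
    ← kap_XX _ _ _ (hE.diff hA)]
  have m1 := XX_meas hA
  have m2 := XX_meas hE
  have m3 := XX_meas (hA.diff hE)
  have m4 := XX_meas (hE.diff hA)
  have m5 := m2.inter (BB_meas hA hE)
  rw [← lintegral_indicator_one m1, ← lintegral_indicator_one m2, ← lintegral_indicator_one m3,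
    ← lintegral_indicator_one m4, ← lintegral_indicator_one m5]
  have k : ∀ S : Set (VV N × VV N), MeasurableSet S →
    Measurable (S.indicator (1 : VV N × VV N → ℝ≥0∞)) := fun S hS => measurable_one.indicator hS
  rw [← lintegral_add_left (k _ m2), ← lintegral_add_right _ (k _ m4),
    ← lintegral_const_mul _ (k _ m5), ← lintegral_add_left (k _ m1)]
  apply lintegral_mono
  intro p
  classical
  simp only [Set.indicator_apply, Set.mem_inter_iff, mem_XX, Set.mem_sdiff, BB, Set.mem_ofPred_eq,
    Pi.one_apply]
  by_cases h1 : p.1 ∈ A <;> by_cases h2 : p.2 ∈ A <;> by_cases h3 : p.1 ∈ E <;>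
    by_cases h4 : p.2 ∈ E <;> simp [h1, h2, h3, h4] <;> norm_num

theorem kap_ae (N : ℕ) (α : ℝ) {P : VV N → Prop} (h : ∀ᵐ x, P x) :
    ∀ᵐ p ∂(kap N α), P p.1 ∧ P p.2 := by
  have hac : kap N α ≪ (volume : Measure (VV N)).prod volume :=
    withDensity_absolutelyContinuous _ _
  apply hac.ae_le
  filter_upwards [Measure.quasiMeasurePreserving_fst.ae h,
    Measure.quasiMeasurePreserving_snd.ae h] with p h1 h2 using ⟨h1, h2⟩

theorem bl_lim (N : ℕ) (α : ℝ) (A : ℕ → Set (VV N)) (E : Set (VV N))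
    (hA : ∀ n, MeasurableSet (A n)) (hE : MeasurableSet E) (hf : fracPer N α E < ⊤)
    (hc : ∀ᵐ x, ∀ᶠ n in atTop, (x ∈ A n ↔ x ∈ E)) :
    Tendsto (fun n => kap N α (XX E ∩ BB (A n) E)) atTop (𝓝 0) := by
  rw [← measure_empty (μ := kap N α)]
  apply tendsto_measure_of_ae_tendsto_indicator atTop MeasurableSet.empty
    (fun n => (XX_meas hE).inter (BB_meas (hA n) hE)) (XX_meas hE)
  · rw [kap_XX _ _ _ hE]
    exact ENNReal.mul_ne_top (by simp) hf.ne
  · exact Eventually.of_forall fun n => Set.inter_subset_left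
  · filter_upwards [kap_ae N α hc] with p hp
    filter_upwards [hp.1, hp.2] with n h1 h2
    simp [BB, h1, h2]

theorem fatou_set {X : Type*} [MeasurableSpace X] (μ : Measure X) (A : ℕ → Set X) (E : Set X)
    (c : ℝ≥0∞) (hc : ∀ n, μ (A n) ≤ c) (h : ∀ᵐ x ∂μ, x ∈ E → ∀ᶠ n in atTop, x ∈ A n) :
    μ E ≤ c := by
  have h1 : μ E ≤ μ (⋃ n, ⋂ k, ⋂ (_ : n ≤ k), A k) := by
    apply measure_mono_ae
    filter_upwards [h] with x hx hxE
    obtain ⟨n, hn⟩ := eventually_atTop.1 (hx hxE)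
    exact Set.mem_iUnion.2 ⟨n, Set.mem_iInter₂.2 hn⟩
  refine h1.trans ?_
  have hmono : Monotone (fun n => ⋂ k, ⋂ (_ : n ≤ k), A k) := by
    intro a b hab
    exact Set.biInter_subset_biInter_left (fun k (hk : b ≤ k) => le_trans hab hk)
  rw [hmono.measure_iUnion]
  exact iSup_le fun n => (measure_mono (Set.iInter₂_subset n le_rfl)).trans (hc n)

theorem fatou_per (N : ℕ) (α : ℝ) (A : ℕ → Set (VV N)) (E : Set (VV N))
    (hA : ∀ n, MeasurableSet (A n)) (hE : MeasurableSet E) (c : ℝ≥0∞)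
    (hb : ∀ n, fracPer N α (A n) ≤ c)
    (hc : ∀ᵐ x, ∀ᶠ n in atTop, (x ∈ A n ↔ x ∈ E)) : fracPer N α E ≤ c := by
  have := fatou_set (kap N α) (fun n => XX (A n)) (XX E) (2 * c)
    (fun n => by rw [kap_XX _ _ _ (hA n)]; gcongr; exact hb n) (by
      filter_upwards [kap_ae N α hc] with p hp hpE
      filter_upwards [hp.1, hp.2] with n h1 h2
      rw [mem_XX] at hpE ⊢
      rw [h1, h2]; exact hpE)
  rw [kap_XX _ _ _ hE] at this
  exact (ENNReal.mul_le_mul_iff_right (by simp) (by simp)).1 this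

theorem ball_fin (N : ℕ) (hN : 2 ≤ N) (t : ℝ) (ht0 : 0 < t) (ht : t < 1) :
    fracPer N t (Metric.ball (0 : VV N) 1) < ⊤ := by
  rw [fracPer_eq]
  have : Nonempty (Fin N) := ⟨⟨0, by omega⟩⟩
  have key : ∀ x ∈ Metric.ball (0 : VV N) 1, ∫⁻ y in (Metric.ball (0 : VV N) 1)ᶜ, kk N t (x - y) ≤
      ENNReal.ofReal ((1 - ‖x‖) ^ (-t)) * tc N t := by
    intro x hx
    have hx : ‖x‖ < 1 := by simpa using hx
    rw [← tail_eq N t (1 - ‖x‖) (by linarith) x]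
    apply lintegral_mono_set
    intro y hy
    have hy : 1 ≤ ‖y‖ := by simpa using hy
    have := norm_sub_norm_le y x
    rw [norm_sub_rev] at this
    show 1 - ‖x‖ ≤ ‖x - y‖
    linarith
  refine (setLIntegral_mono' measurableSet_ball key).trans_lt ?_
  rw [lintegral_mul_const' _ _ (tc_lt N t ht0).ne]
  refine ENNReal.mul_lt_top ?_ (tc_lt N t ht0)
  have hi : IntegrableOn (fun x : VV N => (fun y : ℝ => (1 - y) ^ (-t)) ‖x‖)
      (Metric.ball (0 : VV N) 1) volume := by
    refine (integrableOn_fun_norm_addHaar (volume : Measure (VV N)) (f := fun y : ℝ => (1 - y) ^ (-t))).2 ?_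
    have h1 : IntegrableOn (fun y : ℝ => (1 - y) ^ (-t)) (Set.Ioo 0 1) := by
      have h2 : IntervalIntegrable (fun x : ℝ => x ^ (-t)) volume 0 1 :=
        intervalIntegral.intervalIntegrable_rpow' (by linarith)
      have h3 := h2.comp_sub_left 1
      simp only [sub_zero, sub_self] at h3
      have h4 := h3.symm
      rw [intervalIntegrable_iff_integrableOn_Ioo_of_le zero_le_one] at h4
      exact h4
    refine Integrable.mono h1 ?_ ?_
    · apply Measurable.aestronglyMeasurable; fun_prop
    · filter_upwards [ae_restrict_mem measurableSet_Ioo] with y hy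
      rw [norm_smul]
      apply mul_le_of_le_one_left (norm_nonneg _)
      rw [norm_pow, Real.norm_of_nonneg hy.1.le]
      exact pow_le_one₀ hy.1.le hy.2.le
  exact hi.lintegral_lt_top


/-- functional of integration on a set -/
noncomputable def fE (N : ℕ) (E : Set (VV N)) : StrongDual ℝ (Lp ℝ 1 (volume : Measure (VV N))) :=
  LinearMap.mkContinuous
    { toFun := fun f => ∫ x in E, f x
      map_add' := by
        intro f g
        rw [← integral_add (L1.integrable_coeFn f).integrableOn (L1.integrable_coeFn g).integrableOn]
        exact integral_congr_ae (ae_restrict_of_ae (Lp.coeFn_add f g))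
      map_smul' := by
        intro c f
        rw [RingHom.id_apply, smul_eq_mul, ← integral_const_mul]
        exact integral_congr_ae (ae_restrict_of_ae (Lp.coeFn_smul c f)) } 1 (by
    intro f
    rw [one_mul, L1.norm_eq_integral_norm]
    refine (norm_integral_le_integral_norm _).trans ?_
    exact setIntegral_le_integral (L1.integrable_coeFn f).norm (ae_of_all _ fun x => norm_nonneg _))

theorem fE_apply (N : ℕ) (E : Set (VV N)) (f) : fE N E f = ∫ x in E, f x := rfl

theorem fE_norm (N : ℕ) (E : Set (VV N)) : ‖fE N E‖ ≤ 1 :=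
  LinearMap.mkContinuous_norm_le _ zero_le_one _

theorem weak_conv (N : ℕ) (E : ℕ → Set (VV N)) (hE : ∀ n, MeasurableSet (E n)) :
    ∃ φ : ℕ → ℕ, StrictMono φ ∧ ∀ (x : VV N) (r : ℝ), ∃ l : ℝ,
      Tendsto (fun n => volume.real (E (φ n) ∩ Metric.ball x r)) atTop (𝓝 l) := by
  haveI : Fact ((1 : ℝ≥0∞) ≠ ⊤) := ⟨one_ne_top⟩
  have hc := WeakDual.isSeqCompact_closedBall ℝ (Lp ℝ 1 (volume : Measure (VV N))) 0 1
  obtain ⟨a, ha, φ, hφ, hl⟩ := hc (x := fun n => StrongDual.toWeakDual (fE N (E n))) (by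
    intro n
    simpa using fE_norm N (E n))
  refine ⟨φ, hφ, fun x r => ?_⟩
  let g : Lp ℝ 1 (volume : Measure (VV N)) :=
    indicatorConstLp 1 (measurableSet_ball (x := x) (ε := r)) (measure_ball_lt_top.ne) (1 : ℝ)
  refine ⟨a g, ?_⟩
  have h1 := ((WeakDual.eval_continuous g).tendsto a).comp hl
  refine h1.congr ?_
  intro n
  show fE N (E (φ n)) g = _
  rw [fE_apply, setIntegral_indicatorConstLp (hE _)]
  simp [Set.inter_comm]

theorem meas_cap (N : ℕ) (B : Set (VV N)) (hB : MeasurableSet B) (ε : ℝ) :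
    Measurable (fun x : VV N => volume (B ∩ Metric.ball x ε)) := by
  have : MeasurableSet {p : VV N × VV N | p.2 ∈ B ∧ dist p.2 p.1 < ε} :=
    (measurable_snd hB).inter (measurableSet_lt (measurable_snd.dist measurable_fst) measurable_const)
  exact measurable_measure_prodMk_left this

theorem near (N : ℕ) (α ε : ℝ) (hα : 0 < α) (hε : 0 < ε) (A B : Set (VV N))
    (hA : MeasurableSet A) (hB : MeasurableSet B) (hAB : Disjoint A B) :
    ∫⁻ x in A, volume (B ∩ Metric.ball x ε) ≤
      ENNReal.ofReal (ε ^ ((N : ℝ) + α)) * ∫⁻ x in A, ∫⁻ y in B, kk N α (x - y) := by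
  have hN0 : (0 : ℝ) ≤ N := Nat.cast_nonneg N
  have hm2 : Measurable (fun x => ∫⁻ y in B, kk N α (x - y)) :=
    Measurable.lintegral_prod_right' (kk_meas2 N α)
  rw [← lintegral_const_mul _ hm2]
  refine setLIntegral_mono' hA ?_
  intro x hx
  have hm : Measurable (fun y => kk N α (x - y)) :=
    (kk_meas N α).comp (measurable_const.sub measurable_id)
  rw [← lintegral_const_mul _ hm]
  have hmc : MeasurableSet (B ∩ Metric.ball x ε) := hB.inter measurableSet_ball
  calc volume (B ∩ Metric.ball x ε) = ∫⁻ y in (B ∩ Metric.ball x ε), 1 := by simp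
    _ ≤ ∫⁻ y in (B ∩ Metric.ball x ε),
        ENNReal.ofReal (ε ^ ((N : ℝ) + α)) * kk N α (x - y) := by
        refine setLIntegral_mono' hmc ?_
        rintro y ⟨hy1, hy2⟩
        have hne : x - y ≠ 0 := by
          intro h0; rw [sub_eq_zero] at h0
          exact Set.disjoint_left.1 hAB hx (h0 ▸ hy1)
        rw [Metric.mem_ball, dist_comm, dist_eq_norm] at hy2
        unfold kk
        rw [← ENNReal.ofReal_mul (by positivity), ENNReal.one_le_ofReal]
        have h1 : ε ^ (-((N : ℝ) + α)) ≤ ‖x - y‖ ^ (-((N : ℝ) + α)) :=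
          Real.rpow_le_rpow_of_nonpos (norm_pos_iff.2 hne) hy2.le (by linarith)
        calc (1 : ℝ) = ε ^ ((N : ℝ) + α) * ε ^ (-((N : ℝ) + α)) := by
              rw [← Real.rpow_add hε]; simp
          _ ≤ _ := by gcongr
    _ ≤ _ := lintegral_mono_set Set.inter_subset_left

/-- averages -/
noncomputable def av (N : ℕ) (ε : ℝ) (E : Set (VV N)) (x : VV N) : ℝ :=
  volume.real (E ∩ Metric.ball x ε) / volume.real (Metric.ball (0 : VV N) ε)

theorem av_meas (N : ℕ) (ε : ℝ) (E : Set (VV N)) (hE : MeasurableSet E) :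
    Measurable (av N ε E) :=
  ((meas_cap N E hE ε).ennreal_toReal).div_const _

theorem vr_ball (N : ℕ) (ε : ℝ) (x : VV N) :
    volume (Metric.ball x ε) = volume (Metric.ball (0 : VV N) ε) :=
  Measure.addHaar_ball_center _ _ _

theorem av_bound (N : ℕ) (ε : ℝ) (hε : 0 < ε) (E : Set (VV N)) (x : VV N) :
    ‖av N ε E x‖ ≤ 1 := by
  unfold av
  rw [Real.norm_of_nonneg (by positivity)]
  apply div_le_one_of_le₀ _ (by positivity)
  have : volume.real (Metric.ball (0 : VV N) ε) = volume.real (Metric.ball x ε) := by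
    simp only [Measure.real, vr_ball N ε x]
  rw [this]
  exact measureReal_mono Set.inter_subset_right measure_ball_lt_top.ne

noncomputable def uu {N : ℕ} (E : Set (VV N)) : VV N → ℝ := E.indicator (fun _ => (1 : ℝ))

theorem uu_av (N : ℕ) (t ε : ℝ) (ht : 0 < t) (hε : 0 < ε) (E : Set (VV N)) (hE : MeasurableSet E) :
    ∫⁻ x, ‖uu E x - av N ε E x‖ₑ ≤ ENNReal.ofReal (ε ^ t) * (2 * fracPer N t E / om N) := by
  set b := volume (Metric.ball (0 : VV N) ε) with hb
  have hb0 : b ≠ 0 := (Metric.measure_ball_pos _ _ hε).ne'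
  have hbt : b ≠ ⊤ := measure_ball_lt_top.ne
  have e1 : ∀ x ∈ E, ‖uu E x - av N ε E x‖ₑ = volume (Eᶜ ∩ Metric.ball x ε) / b := by
    intro x hx
    have h2 : volume.real (E ∩ Metric.ball x ε) + volume.real (Eᶜ ∩ Metric.ball x ε) = b.toReal := by
      rw [hb, ← vr_ball N ε x, Set.inter_comm, Set.inter_comm Eᶜ, ← Set.sdiff_eq]
      exact measureReal_inter_add_sdiff hE measure_ball_lt_top.ne
    have hbr : 0 < b.toReal := ENNReal.toReal_pos hb0 hbt
    have h3 : uu E x - av N ε E x = volume.real (Eᶜ ∩ Metric.ball x ε) / b.toReal := by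
      unfold uu av
      rw [Set.indicator_of_mem hx]
      change 1 - _ / b.toReal = _
      field_simp
      linarith
    rw [h3, Real.enorm_of_nonneg (by positivity), ENNReal.ofReal_div_of_pos hbr,
      ENNReal.ofReal_toReal hbt, ofReal_measureReal
        ((measure_mono Set.inter_subset_right).trans_lt measure_ball_lt_top).ne]
  have e2 : ∀ x ∈ Eᶜ, ‖uu E x - av N ε E x‖ₑ = volume (E ∩ Metric.ball x ε) / b := by
    intro x hx
    have hbr : 0 < b.toReal := ENNReal.toReal_pos hb0 hbt
    have h3 : uu E x - av N ε E x = - (volume.real (E ∩ Metric.ball x ε) / b.toReal) := by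
      unfold uu av
      rw [Set.indicator_of_notMem hx, zero_sub]
      rfl
    rw [h3, enorm_neg, Real.enorm_of_nonneg (by positivity), ENNReal.ofReal_div_of_pos hbr,
      ENNReal.ofReal_toReal hbt, ofReal_measureReal
        ((measure_mono Set.inter_subset_right).trans_lt measure_ball_lt_top).ne]
  rw [← lintegral_add_compl _ hE, setLIntegral_congr_fun hE e1,
    setLIntegral_congr_fun hE.compl e2]
  simp only [div_eq_mul_inv]
  rw [lintegral_mul_const _ (meas_cap N _ hE.compl ε), lintegral_mul_const _ (meas_cap N _ hE ε)]
  have n1 := near N t ε ht hε E Eᶜ hE hE.compl disjoint_compl_right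
  have n2 := near N t ε ht hε Eᶜ E hE.compl hE disjoint_compl_left
  rw [inter_symm N t Eᶜ E] at n2
  rw [← fracPer_eq] at n1 n2
  have hbe : b = ENNReal.ofReal (ε ^ (N : ℝ)) * om N := vol_ball N 0 ε hε
  have hbi : ENNReal.ofReal (ε ^ ((N : ℝ) + t)) * b⁻¹ = ENNReal.ofReal (ε ^ t) * (om N)⁻¹ := by
    have hp : ENNReal.ofReal (ε ^ (N : ℝ)) ≠ 0 := (ENNReal.ofReal_pos.2 (by positivity)).ne'
    rw [hbe, ENNReal.mul_inv (Or.inl hp) (Or.inl ENNReal.ofReal_ne_top), Real.rpow_add hε,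
      ENNReal.ofReal_mul (by positivity)]
    calc _ = (ENNReal.ofReal (ε ^ (N : ℝ)) * (ENNReal.ofReal (ε ^ (N : ℝ)))⁻¹) *
        (ENNReal.ofReal (ε ^ t) * (om N)⁻¹) := by ring
      _ = _ := by rw [ENNReal.mul_inv_cancel hp ENNReal.ofReal_ne_top, one_mul]
  calc _ ≤ (ENNReal.ofReal (ε ^ ((N : ℝ) + t)) * fracPer N t E) * b⁻¹ +
        (ENNReal.ofReal (ε ^ ((N : ℝ) + t)) * fracPer N t E) * b⁻¹ := by gcongr
    _ = (ENNReal.ofReal (ε ^ ((N : ℝ) + t)) * b⁻¹) * (2 * fracPer N t E) := by ring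
    _ = _ := by rw [hbi]; ring


theorem exists_fin_meas (N : ℕ) : ∃ μ : Measure (VV N), IsFiniteMeasure μ ∧ μ ≤ volume ∧
    (volume : Measure (VV N)) ≪ μ := by
  have hi : Integrable (fun x : VV N => (1 + ‖x‖) ^ (-((N : ℝ) + 1))) := by
    apply integrable_one_add_norm
    rw [finrank_euclideanSpace_fin]; linarith
  have hm : Measurable (fun x : VV N => ENNReal.ofReal ((1 + ‖x‖) ^ (-((N : ℝ) + 1)))) := by
    fun_prop
  refine ⟨volume.withDensity (fun x => ENNReal.ofReal ((1 + ‖x‖) ^ (-((N : ℝ) + 1)))),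
    isFiniteMeasure_withDensity hi.lintegral_lt_top.ne, ?_, ?_⟩
  · conv_rhs => rw [← withDensity_one (μ := (volume : Measure (VV N)))]
    apply withDensity_mono
    refine ae_of_all _ fun x => ?_
    rw [Pi.one_apply, ENNReal.ofReal_le_one]
    apply Real.rpow_le_one_of_one_le_of_nonpos
    · linarith [norm_nonneg x]
    · have : (0 : ℝ) ≤ N := Nat.cast_nonneg N
      linarith
  · apply withDensity_absolutelyContinuous' hm.aemeasurable
    refine ae_of_all _ fun x => ?_
    exact (ENNReal.ofReal_pos.2 (Real.rpow_pos_of_pos (by linarith [norm_nonneg x]) _)).ne'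

theorem uu_meas {N : ℕ} {E : Set (VV N)} (hE : MeasurableSet E) : Measurable (uu E) :=
  measurable_const.indicator hE

theorem compactness (N : ℕ) (t : ℝ) (ht : 0 < t) (C : ℝ≥0∞) (hC : C < ⊤)
    (E : ℕ → Set (VV N)) (hE : ∀ n, MeasurableSet (E n)) (hP : ∀ n, fracPer N t (E n) ≤ C) :
    ∃ φ : ℕ → ℕ, StrictMono φ ∧ ∃ F : Set (VV N), MeasurableSet F ∧
      ∀ᵐ x, ∀ᶠ n in atTop, (x ∈ E (φ n) ↔ x ∈ F) := by
  obtain ⟨φ, hφ, hw⟩ := weak_conv N E hE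
  obtain ⟨μ, hμf, hμle, hμac⟩ := exists_fin_meas N
  set K : ℝ≥0∞ := 2 * C / om N with hK
  have hKf : K < ⊤ := ENNReal.div_lt_top (ENNReal.mul_ne_top (by simp) hC.ne) (om_pos N).ne'
  -- Cauchy
  have hcau : ∀ δ : ℝ≥0∞, 0 < δ → ∃ n0, ∀ n ≥ n0, ∀ m ≥ n0,
      eLpNorm (uu (E (φ n)) - uu (E (φ m))) 1 μ < 4 * δ := by
    intro δ hδ
    obtain ⟨ε, hε, hε1⟩ : ∃ ε : ℝ, 0 < ε ∧ ENNReal.ofReal (ε ^ t) * K < δ := by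
      rcases eq_or_ne δ ⊤ with rfl | hδt
      · exact ⟨1, one_pos, ENNReal.mul_lt_top ENNReal.ofReal_lt_top hKf⟩
      have hδr : 0 < δ.toReal := ENNReal.toReal_pos hδ.ne' hδt
      refine ⟨(δ.toReal / (K.toReal + 1)) ^ t⁻¹, by positivity, ?_⟩
      rw [← Real.rpow_mul (by positivity), inv_mul_cancel₀ ht.ne', Real.rpow_one]
      nth_rewrite 2 [← ENNReal.ofReal_toReal hKf.ne]
      rw [← ENNReal.ofReal_mul (by positivity), ENNReal.ofReal_lt_iff_lt_toReal (by positivity) hδt,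
        div_mul_eq_mul_div, div_lt_iff₀ (by positivity)]
      nlinarith
    have hg : ∀ x, ∃ l : ℝ, Tendsto (fun n => av N ε (E (φ n)) x) atTop (𝓝 l) := by
      intro x
      obtain ⟨l, hl⟩ := hw x ε
      exact ⟨_, hl.div_const _⟩
    choose g hg using hg
    have hgm : Measurable g :=
      measurable_of_tendsto_metrizable (fun n => av_meas N ε _ (hE (φ n))) (tendsto_pi_nhds.2 hg)
    have hlim := tendsto_lintegral_norm_of_dominated_convergence (μ := μ)
      (F := fun n => av N ε (E (φ n))) (f := g) (bound := fun _ => 1)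
      (fun n => (av_meas N ε _ (hE (φ n))).aestronglyMeasurable)
      (integrable_const 1).hasFiniteIntegral
      (fun n => ae_of_all _ fun x => av_bound N ε hε _ x) (ae_of_all _ hg)
    obtain ⟨n0, hn0⟩ := eventually_atTop.1 (hlim.eventually (gt_mem_nhds hδ))
    have hs1 : ∀ n, ∫⁻ x, ‖uu (E (φ n)) x - av N ε (E (φ n)) x‖ₑ ∂μ < δ := by
      intro n
      refine (lintegral_mono' hμle le_rfl).trans_lt ?_
      refine (uu_av N t ε ht hε _ (hE _)).trans_lt (lt_of_le_of_lt ?_ hε1)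
      rw [hK]
      gcongr
      exact hP _
    have hs2 : ∀ n ≥ n0, ∫⁻ x, ‖av N ε (E (φ n)) x - g x‖ₑ ∂μ < δ := by
      intro n hn
      have := hn0 n hn
      simpa only [ofReal_norm] using this
    refine ⟨n0, fun n hn m hm => ?_⟩
    have mu1 : ∀ n, Measurable (fun x => ‖uu (E (φ n)) x - av N ε (E (φ n)) x‖ₑ) := fun n =>
      ((uu_meas (hE _)).sub (av_meas N ε _ (hE _))).enorm
    have mu2 : ∀ n, Measurable (fun x => ‖av N ε (E (φ n)) x - g x‖ₑ) := fun n =>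
      ((av_meas N ε _ (hE _)).sub hgm).enorm
    rw [eLpNorm_one_eq_lintegral_enorm]
    calc ∫⁻ x, ‖(uu (E (φ n)) - uu (E (φ m))) x‖ₑ ∂μ
        ≤ ∫⁻ x, ((‖uu (E (φ n)) x - av N ε (E (φ n)) x‖ₑ + ‖av N ε (E (φ n)) x - g x‖ₑ) +
          (‖uu (E (φ m)) x - av N ε (E (φ m)) x‖ₑ + ‖av N ε (E (φ m)) x - g x‖ₑ)) ∂μ := by
          apply lintegral_mono
          intro x
          have : (uu (E (φ n)) - uu (E (φ m))) x =
            ((uu (E (φ n)) x - av N ε (E (φ n)) x) + (av N ε (E (φ n)) x - g x)) -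
            ((uu (E (φ m)) x - av N ε (E (φ m)) x) + (av N ε (E (φ m)) x - g x)) := by
            rw [Pi.sub_apply]; ring
          simp only [this]
          exact (enorm_sub_le).trans (add_le_add (enorm_add_le _ _) (enorm_add_le _ _))
      _ = _ := by
          have mu3 : Measurable (fun x => ‖uu (E (φ n)) x - av N ε (E (φ n)) x‖ₑ +
            ‖av N ε (E (φ n)) x - g x‖ₑ) := (mu1 n).add (mu2 n)
          rw [lintegral_add_left mu3, lintegral_add_left (mu1 n),
            lintegral_add_left (mu1 m)]
      _ < (δ + δ) + (δ + δ) :=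
          ENNReal.add_lt_add (ENNReal.add_lt_add (hs1 n) (hs2 n hn))
            (ENNReal.add_lt_add (hs1 m) (hs2 m hm))
      _ = 4 * δ := by ring
  obtain ⟨ψ, hψ, hB⟩ := extraction_forall_of_eventually' (P := fun k n0 => ∀ n ≥ n0, ∀ m ≥ n0,
      eLpNorm (uu (E (φ n)) - uu (E (φ m))) 1 μ < 4 * (2⁻¹ : ℝ≥0∞) ^ k) (by
    intro k
    obtain ⟨n0, h0⟩ := hcau ((2⁻¹ : ℝ≥0∞) ^ k) (ENNReal.pow_pos (by simp) k)
    exact ⟨n0, fun k' hk' n hn m hm => h0 n (hk'.trans hn) m (hk'.trans hm)⟩)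
  have hae := MeasureTheory.Lp.ae_tendsto_of_cauchy_eLpNorm (μ := μ) (p := 1) (f := fun n => uu (E (φ (ψ n))))
    (B := fun k => 4 * (2⁻¹ : ℝ≥0∞) ^ k)
    (fun n => (uu_meas (hE _)).aestronglyMeasurable) le_rfl (by
      rw [ENNReal.tsum_mul_left, ENNReal.tsum_geometric]
      simp [ENNReal.mul_eq_top])
    (fun k n m hn hm => hB k _ (hψ.monotone hn) _ (hψ.monotone hm))
  refine ⟨φ ∘ ψ, hφ.comp hψ, ⋃ n, ⋂ k, ⋂ (_ : n ≤ k), E (φ (ψ k)), ?_, ?_⟩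
  · exact MeasurableSet.iUnion fun n => MeasurableSet.iInter fun k => MeasurableSet.iInter fun _ => hE _
  · filter_upwards [hμac.ae_le hae] with x hx
    obtain ⟨l, hl⟩ := hx
    have hev : (∀ᶠ n in atTop, x ∈ E (φ (ψ n))) ∨ (∀ᶠ n in atTop, x ∉ E (φ (ψ n))) := by
      rcases lt_or_ge (1/2 : ℝ) l with h | h
      · left
        filter_upwards [hl.eventually (lt_mem_nhds h)] with n hn
        by_contra hcon
        rw [uu, Set.indicator_of_notMem hcon] at hn
        norm_num at hn
      · right
        filter_upwards [hl.eventually (gt_mem_nhds (lt_of_le_of_lt h (by norm_num : (1/2 : ℝ) < 1)))]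
          with n hn
        intro hcon
        rw [uu, Set.indicator_of_mem hcon] at hn
        norm_num at hn
    have hmem : x ∈ (⋃ n, ⋂ k, ⋂ (_ : n ≤ k), E (φ (ψ k))) ↔ ∀ᶠ n in atTop, x ∈ E (φ (ψ n)) := by
      simp [eventually_atTop]
    rcases hev with h | h
    · filter_upwards [h] with n hn
      exact ⟨fun _ => hmem.2 h, fun _ => hn⟩
    · filter_upwards [h] with n hn
      refine ⟨fun h' => absurd h' hn, fun h' => ?_⟩
      obtain ⟨k, hk1, hk2⟩ := ((hmem.1 h').and h).exists
      exact absurd hk1 hk2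


theorem fp_normalize (N : ℕ) (hN : 2 ≤ N) (s t : ℝ) (hs : 0 < s) (hst : s < t) (ht : t < 1)
    (E : Set (VV N)) (hE : MeasurableSet E) (hv0 : 0 < volume E) (hv : volume E < ⊤)
    (hP : fracPer N t E < ⊤) :
    ∃ E' : Set (VV N), MeasurableSet E' ∧ 0 < volume E' ∧ volume E' < ⊤ ∧ fracPer N s E' = 1 ∧
      fracPer N t E' = ENNReal.ofReal ((fracPer N s E).toReal ^
        (-(((N : ℝ) - t) / ((N : ℝ) - s)))) * fracPer N t E := by
  have hN' : (2 : ℝ) ≤ N := by exact_mod_cast hN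
  have hps := fracPer_s_lt N s t hst hs E hE hv hP
  have hp0 := fracPer_pos N hN s hs E hE hv0 hv
  set p := (fracPer N s E).toReal with hp
  have hpp : 0 < p := ENNReal.toReal_pos hp0.ne' hps.ne
  have hNs : (N : ℝ) - s ≠ 0 := by linarith
  have hc : 0 < p ^ (1 / ((N : ℝ) - s)) := Real.rpow_pos_of_pos hpp _
  refine ⟨(fun x => (p ^ (1 / ((N : ℝ) - s))) • x) ⁻¹' E, ?_, ?_, ?_, ?_, ?_⟩
  · exact hE.preimage (measurable_const_smul _)
  · rw [vol_pre_smul N _ hc]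
    exact ENNReal.mul_pos (ENNReal.ofReal_pos.2 (Real.rpow_pos_of_pos hc _)).ne' hv0.ne'
  · rw [vol_pre_smul N _ hc]
    exact ENNReal.mul_lt_top ENNReal.ofReal_lt_top hv
  · rw [fracPer_pre_smul N s _ hc E hE, ← Real.rpow_mul hpp.le]
    have : 1 / ((N : ℝ) - s) * -((N : ℝ) - s) = -1 := by field_simp
    rw [this, Real.rpow_neg_one, ← ENNReal.ofReal_toReal hps.ne, ← hp,
      ← ENNReal.ofReal_mul (by positivity), inv_mul_cancel₀ hpp.ne', ENNReal.ofReal_one]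
  · rw [fracPer_pre_smul N t _ hc E hE, ← Real.rpow_mul hpp.le]
    congr 3
    field_simp

theorem strict_conc (a b c θ : ℝ) (ha : 0 < a) (ha1 : a < 1) (hb : 0 ≤ b) (hc : 0 ≤ c)
    (h : 1 ≤ a + b + c) (h0 : 0 < θ) (h1 : θ < 1) :
    a ^ θ + (1 - a) ^ θ ≤ a ^ θ + b ^ θ + c ^ θ := by
  have h2 := Real.rpow_add_le_add_rpow hb hc h0.le h1.le
  have h3 : (1 - a) ^ θ ≤ (b + c) ^ θ :=
    Real.rpow_le_rpow (by linarith) (by linarith) h0.le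
  linarith

theorem strict_conc2 (a θ : ℝ) (ha : 0 < a) (ha1 : a < 1) (h1 : θ < 1) :
    1 < a ^ θ + (1 - a) ^ θ := by
  have h2 := Real.rpow_lt_rpow_of_exponent_gt ha ha1 h1
  have h3 := Real.rpow_lt_rpow_of_exponent_gt (x := 1 - a) (by linarith) (by linarith) h1
  rw [Real.rpow_one] at h2 h3
  linarith

def TT (N : ℕ) (s t : ℝ) : Set ℝ≥0∞ := {c | ∃ E : Set (VV N), MeasurableSet E ∧ 0 < volume E ∧
  volume E < ⊤ ∧ fracPer N t E < ⊤ ∧ fracPer N s E = 1 ∧ fracPer N t E = c}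

theorem TT_le (N : ℕ) (hN : 2 ≤ N) (s t : ℝ) (hs : 0 < s) (hst : s < t) (ht : t < 1)
    (E : Set (VV N)) (hE : MeasurableSet E) (hv : volume E < ⊤) :
    ENNReal.ofReal ((fracPer N s E).toReal ^ (((N : ℝ) - t) / ((N : ℝ) - s))) * sInf (TT N s t)
      ≤ fracPer N t E := by
  have hN' : (2 : ℝ) ≤ N := by exact_mod_cast hN
  have hθ : 0 < ((N : ℝ) - t) / ((N : ℝ) - s) := div_pos (by linarith) (by linarith)
  rcases eq_or_ne (volume E) 0 with h0 | h0
  · rw [fracPer_zero N s E h0, ENNReal.toReal_zero, Real.zero_rpow hθ.ne']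
    simp
  rcases eq_or_ne (fracPer N t E) ⊤ with h1 | h1
  · rw [h1]; exact le_top
  have hv0 : 0 < volume E := pos_iff_ne_zero.2 h0
  have hP : fracPer N t E < ⊤ := lt_top_iff_ne_top.2 h1
  obtain ⟨E', hE', hv0', hv', hs', ht'⟩ := fp_normalize N hN s t hs hst ht E hE hv0 hv hP
  have hps := fracPer_s_lt N s t hst hs E hE hv hP
  have hp0 := fracPer_pos N hN s hs E hE hv0 hv
  have hpp : 0 < (fracPer N s E).toReal := ENNReal.toReal_pos hp0.ne' hps.ne
  have hle : sInf (TT N s t) ≤ fracPer N t E' :=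
    sInf_le ⟨E', hE', hv0', hv', by
      rw [ht']; exact ENNReal.mul_lt_top ENNReal.ofReal_lt_top hP, hs', rfl⟩
  calc _ ≤ ENNReal.ofReal ((fracPer N s E).toReal ^ (((N : ℝ) - t) / ((N : ℝ) - s))) *
        fracPer N t E' := by gcongr
    _ = fracPer N t E := by
      rw [ht', ← mul_assoc, ← ENNReal.ofReal_mul (by positivity), ← Real.rpow_add hpp]
      simp

theorem TT_nonempty (N : ℕ) (hN : 2 ≤ N) (s t : ℝ) (hs : 0 < s) (hst : s < t) (ht : t < 1) :
    (TT N s t).Nonempty := by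
  have hP := ball_fin N hN t (hs.trans hst) ht
  obtain ⟨E', hE', hv0', hv', hs', ht'⟩ := fp_normalize N hN s t hs hst ht (Metric.ball 0 1)
    measurableSet_ball (Metric.measure_ball_pos _ _ one_pos) measure_ball_lt_top hP
  exact ⟨_, E', hE', hv0', hv', by
      rw [ht']; exact ENNReal.mul_lt_top ENNReal.ofReal_lt_top hP, hs', rfl⟩

theorem exists_min (N : ℕ) (hN : 2 ≤ N) (s t : ℝ) (hs : 0 < s) (hst : s < t) (ht : t < 1) :
    ∃ E : Set (VV N), MeasurableSet E ∧ 0 < volume E ∧ volume E < ⊤ ∧ fracPer N t E < ⊤ ∧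
      fracPer N s E = 1 ∧ fracPer N t E ≤ sInf (TT N s t) := by
  have hN' : (2 : ℝ) ≤ N := by exact_mod_cast hN
  have ht0 : 0 < t := hs.trans hst
  obtain ⟨u, hu, hul, huT⟩ := exists_seq_tendsto_sInf (TT_nonempty N hN s t hs hst ht)
    (OrderBot.bddBelow _)
  set m := sInf (TT N s t) with hm
  choose E hE hEv0 hEv hEt hEs hEu using huT
  have hC : u 0 < ⊤ := by rw [← hEu 0]; exact hEt 0
  have hEC : ∀ n, fracPer N t (E n) ≤ u 0 := fun n => by rw [hEu]; exact hu (Nat.zero_le n)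
  obtain ⟨r, hr, hnv⟩ := nonvanish N s t hs hst (u 0) hC
  choose x hx using fun n => hnv (E n) (hE n) (hEC n) (hEs n)
  obtain ⟨M, hM, hMb⟩ := vol_bound N hN t ht0 ht (u 0) hC
  have hmA : ∀ n, MeasurableSet ((fun y => y + x n) ⁻¹' E n) := fun n =>
    (hE n).preimage (measurable_add_const _)
  obtain ⟨φ, hφ, F, hF, hae⟩ := compactness N t ht0 (u 0) hC
    (fun n => (fun y => y + x n) ⁻¹' E n) hmA
    (fun n => by rw [fracPer_pre_add N t _ _ (hE n)]; exact hEC n)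
  set A : ℕ → Set (VV N) := fun n => (fun y => y + x (φ n)) ⁻¹' E (φ n) with hA
  have hAm : ∀ n, MeasurableSet (A n) := fun n => hmA (φ n)
  have hAt : ∀ n, fracPer N t (A n) = u (φ n) := fun n => by
    rw [hA, ← hEu]; exact fracPer_pre_add N t _ _ (hE _)
  have hAs : ∀ n, fracPer N s (A n) = 1 := fun n => by
    rw [← hEs (φ n)]; exact fracPer_pre_add N s _ _ (hE _)
  have hAvE : ∀ n, volume (A n) = volume (E (φ n)) := fun n => vol_pre_add N _ _
  have hAvM : ∀ n, volume (A n) ≤ M := fun n => by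
    rw [hAvE]; exact hMb _ (hE _) (hEv _) (hEC _)
  have hAv : ∀ n, volume (A n) < ⊤ := fun n => (hAvM n).trans_lt hM
  have hFv : volume F < ⊤ := by
    refine lt_of_le_of_lt (fatou_set volume A F M hAvM ?_) hM
    filter_upwards [hae] with y hy hyF
    filter_upwards [hy] with n hn
    exact hn.2 hyF
  have hAball : ∀ n, volume (Metric.ball (0 : VV N) r) / 2 < volume (A n ∩ Metric.ball 0 r) := by
    intro n
    have h1 := hx (φ n)
    rw [vr_ball] at h1
    refine h1.trans_eq ?_
    rw [← vol_pre_add N (x (φ n)) (E (φ n) ∩ Metric.ball (x (φ n)) r)]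
    congr 1
    ext y
    simp [hA, dist_eq_norm]
  have hFv0 : 0 < volume F := by
    have h1 := tendsto_measure_of_ae_tendsto_indicator atTop (μ := (volume : Measure (VV N)))
      (hF.inter measurableSet_ball) (fun n => (hAm n).inter measurableSet_ball)
      (measurableSet_ball (x := (0 : VV N)) (ε := r)) measure_ball_lt_top.ne
      (Eventually.of_forall fun n => Set.inter_subset_right) (by
        filter_upwards [hae] with y hy
        filter_upwards [hy] with n hn
        exact and_congr_left fun _ => hn)
    have h2 := ge_of_tendsto' h1 (fun n => (hAball n).le)
    refine lt_of_lt_of_le ?_ (h2.trans (measure_mono Set.inter_subset_left))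
    exact ENNReal.div_pos (Metric.measure_ball_pos _ _ hr).ne' (by simp)
  have hulφ : Tendsto (fun n => u (φ n)) atTop (𝓝 m) := hul.comp hφ.tendsto_atTop
  have hFt : fracPer N t F ≤ m := by
    refine ge_of_tendsto' hulφ fun k => ?_
    refine fatou_per N t (fun n => A (n + k)) F (fun n => hAm _) hF _ (fun n => ?_) ?_
    · rw [hAt]; exact hu (hφ.monotone (Nat.le_add_left _ _))
    · filter_upwards [hae] with y hy
      exact (tendsto_add_atTop_nat k).eventually hy
  have hmtop : m < ⊤ := (sInf_le (show u 0 ∈ TT N s t from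
    ⟨E 0, hE 0, hEv0 0, hEv 0, hEt 0, hEs 0, hEu 0⟩)).trans_lt hC
  have hFt' : fracPer N t F < ⊤ := hFt.trans_lt hmtop
  have hFs : fracPer N s F ≤ 1 :=
    fatou_per N s A F hAm hF 1 (fun n => (hAs n).le) hae
  have hFs0 : 0 < fracPer N s F := fracPer_pos N hN s hs F hF hFv0 hFv
  have hm0 : 0 < m := (fracPer_pos N hN t ht0 F hF hFv0 hFv).trans_le hFt
  refine ⟨F, hF, hFv0, hFv, hFt', ?_, hFt⟩
  by_contra hne
  have hFs1 : fracPer N s F < 1 := lt_of_le_of_ne hFs hne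
  have hFsf : fracPer N s F < ⊤ := hFs1.trans ENNReal.one_lt_top
  set a := (fracPer N s F).toReal with ha
  have ha0 : 0 < a := ENNReal.toReal_pos hFs0.ne' hFsf.ne
  have ha1 : a < 1 := by
    rw [ha, ← ENNReal.toReal_one]
    exact (ENNReal.toReal_lt_toReal hFsf.ne ENNReal.one_ne_top).2 hFs1
  set θ := ((N : ℝ) - t) / ((N : ℝ) - s) with hθ
  have hθ0 : 0 < θ := div_pos (by linarith) (by linarith)
  have hθ1 : θ < 1 := by rw [hθ, div_lt_one (by linarith)]; linarith
  have key : ∀ n, 2 * (ENNReal.ofReal (a ^ θ + (1 - a) ^ θ) * m) ≤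
      2 * u (φ n) + 3 * kap N t (XX F ∩ BB (A n) F) := by
    intro n
    have hv1 : volume (A n \ F) < ⊤ := (measure_mono Set.diff_subset).trans_lt (hAv n)
    have hv2 : volume (F \ A n) < ⊤ := (measure_mono Set.diff_subset).trans_lt hFv
    have hle := bl_ineq N t (A n) F (hAm n) hF
    rw [hAt] at hle
    refine le_trans ?_ hle
    gcongr
    have e1 := TT_le N hN s t hs hst ht F hF hFv
    have e2 := TT_le N hN s t hs hst ht (A n \ F) ((hAm n).diff hF) hv1
    have e3 := TT_le N hN s t hs hst ht (F \ A n) (hF.diff (hAm n)) hv2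
    rcases eq_or_ne (fracPer N t (A n \ F)) ⊤ with q | q1
    · rw [q]; simp
    rcases eq_or_ne (fracPer N t (F \ A n)) ⊤ with q | q2
    · rw [q]; simp
    have f1 := fracPer_s_lt N s t hst hs _ ((hAm n).diff hF) hv1 (lt_top_iff_ne_top.2 q1)
    have f2 := fracPer_s_lt N s t hst hs _ (hF.diff (hAm n)) hv2 (lt_top_iff_ne_top.2 q2)
    have hsub := subadd N s (A n) F (hAm n) hF
    rw [hAs] at hsub
    have hsub' : 1 ≤ a + (fracPer N s (A n \ F)).toReal + (fracPer N s (F \ A n)).toReal := by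
      have := ENNReal.toReal_mono (by
        exact (ENNReal.add_lt_top.2 ⟨ENNReal.add_lt_top.2 ⟨hFsf, f1⟩, f2⟩).ne) hsub
      rwa [ENNReal.toReal_add (ENNReal.add_lt_top.2 ⟨hFsf, f1⟩).ne f2.ne,
        ENNReal.toReal_add hFsf.ne f1.ne, ENNReal.toReal_one] at this
    have hcc := strict_conc a _ _ θ ha0 ha1 ENNReal.toReal_nonneg ENNReal.toReal_nonneg hsub' hθ0 hθ1
    refine le_trans ?_ (add_le_add (add_le_add e1 e2) e3)
    rw [← add_mul, ← add_mul, ← ENNReal.ofReal_add (by positivity) (by positivity),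
      ← ENNReal.ofReal_add (by positivity) (by positivity)]
    gcongr
  have hlim : Tendsto (fun n => 2 * u (φ n) + 3 * kap N t (XX F ∩ BB (A n) F)) atTop
      (𝓝 (2 * m + 3 * 0)) := by
    apply Tendsto.add
    · exact ENNReal.Tendsto.const_mul hulφ (Or.inr (by simp))
    · exact ENNReal.Tendsto.const_mul (bl_lim N t A F hAm hF hFt' hae) (Or.inr (by simp))
  have hfin := ge_of_tendsto' hlim key
  rw [mul_zero, add_zero] at hfin
  have hfin2 : ENNReal.ofReal (a ^ θ + (1 - a) ^ θ) * m ≤ m :=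
    (ENNReal.mul_le_mul_iff_right (by simp) (by simp)).1 hfin
  have h1 : 1 < ENNReal.ofReal (a ^ θ + (1 - a) ^ θ) :=
    ENNReal.one_lt_ofReal.2 (strict_conc2 a θ ha0 ha1 hθ1)
  have h2 : 1 * m < ENNReal.ofReal (a ^ θ + (1 - a) ^ θ) * m :=
    (ENNReal.mul_lt_mul_iff_left hm0.ne' hmtop.ne).2 h1
  rw [one_mul] at h2
  exact absurd hfin2 (not_le.2 h2)

theorem stmt18 (N : ℕ) (hN : 2 ≤ N) (s t : ℝ) (hs : 0 < s) (hst : s < t) (ht : t < 1) :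
    ∃ E₀ : Set (EuclideanSpace ℝ (Fin N)), MeasurableSet E₀ ∧
      0 < volume E₀ ∧ volume E₀ < ⊤ ∧ fracPer N t E₀ < ⊤ ∧
      ∀ E : Set (EuclideanSpace ℝ (Fin N)), MeasurableSet E →
        0 < volume E → volume E < ⊤ → fracPer N t E < ⊤ →
        isoW N s t E₀ ≤ isoW N s t E := by
  obtain ⟨F, hF, hF0, hFv, hFt, hFs, hFm⟩ := exists_min N hN s t hs hst ht
  refine ⟨F, hF, hF0, hFv, hFt, fun E hE hE0 hEv hEt => ?_⟩
  have hN' : (2 : ℝ) ≤ N := by exact_mod_cast hN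
  have h1 := TT_le N hN s t hs hst ht E hE hEv
  have hps := fracPer_s_lt N s t hst hs E hE hEv hEt
  have hp0 := fracPer_pos N hN s hs E hE hE0 hEv
  have hpp : 0 < (fracPer N s E).toReal := ENNReal.toReal_pos hp0.ne' hps.ne
  unfold isoW
  rw [hFs, ENNReal.toReal_one, mul_one]
  set p := (fracPer N s E).toReal
  have h2 : p ^ (((N : ℝ) - t) / ((N : ℝ) - s)) * (fracPer N t F).toReal ≤
      (fracPer N t E).toReal := by
    have := ENNReal.toReal_mono hEt.ne ((mul_le_mul_right hFm _).trans h1)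
    rwa [ENNReal.toReal_mul, ENNReal.toReal_ofReal (by positivity)] at this
  set q := (fracPer N t F).toReal
  set q' := (fracPer N t E).toReal
  have hq : 0 ≤ q := ENNReal.toReal_nonneg
  have hq' : 0 ≤ q' := ENNReal.toReal_nonneg
  have ht1 : 0 ≤ 1 - t := by linarith
  have h3 : p ^ ((N : ℝ) - t) * q ^ ((N : ℝ) - s) ≤ q' ^ ((N : ℝ) - s) := by
    have := Real.rpow_le_rpow (by positivity) h2 (by linarith : 0 ≤ (N : ℝ) - s)
    rwa [Real.mul_rpow (by positivity) hq, ← Real.rpow_mul hpp.le,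
      div_mul_cancel₀ _ (by linarith : (N : ℝ) - s ≠ 0)] at this
  rw [Real.mul_rpow ht1 hq, Real.mul_rpow ht1 hq', Real.mul_rpow hs.le hpp.le,
    div_le_div_iff₀ (by positivity) (by positivity)]
  have h4 : 0 ≤ (1 - t) ^ ((N : ℝ) - s) * s ^ ((N : ℝ) - t) := by positivity
  nlinarith [mul_le_mul_of_nonneg_left h3 h4]
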